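/- Let N be a nilpotent endomorphism of a finite-dimensional complex vector space H with weight filtration W^N. Then W^N_{−1} = Σ_{i≥0} (Ker(N^{i+1}) ∩ Im(N^{i+1})), the sum of subspaces of H. -/

import Mathlib

namespace Paper

/-! ### Graded quotients -/

/-- The quotient of a subspace `p` by (the trace of) a subspace `q`. -/
abbrev GrQ {M : Type*} [AddCommGroup M] [Module ℂ M] (p q : Submodule ℂ M) :=
  p ⧸ Submodule.comap p.subtype q

/-- The map induced on the quotients `p/q → p'/q'` by a linear map sending `p` into `p'`
and `q` into `q'`. -/
def inducedQuot {M₁ M₂ : Type*} [AddCommGroup M₁] [Module ℂ M₁] [AddCommGroup M₂] [Module ℂ M₂]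
    (f : M₁ →ₗ[ℂ] M₂) (p q : Submodule ℂ M₁) (p' q' : Submodule ℂ M₂)
    (h1 : p ≤ Submodule.comap f p') (h2 : q ≤ Submodule.comap f q') :
    GrQ p q →ₗ[ℂ] GrQ p' q' :=
  Submodule.mapQ _ _ (f.restrict fun x hx => Submodule.mem_comap.mp (h1 hx))
    (by
      intro x hx
      simp only [Submodule.mem_comap, Submodule.subtype_apply] at hx ⊢
      have hfx : f (x : M₁) ∈ q' := Submodule.mem_comap.mp (h2 hx)
      simpa [LinearMap.restrict_apply] using hfx)

variable {H : Type*} [AddCommGroup H] [Module ℂ H]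

/-! ### Weight filtrations -/

/-- `W` is the weight filtration of the nilpotent endomorphism `N`: an increasing filtration,
equal to `0` for small indices and to the whole space for large indices, such that
`N (W i) ⊆ W (i - 2)` and such that for every `i ≥ 0` the map `Gr_i → Gr_{-i}` induced
by `N ^ i` on the graded pieces `Gr_i = W i / W (i-1)` is an isomorphism. -/
structure IsWeightFiltration (N : Module.End ℂ H) (W : ℤ → Submodule ℂ H) : Prop where
  mono : Monotone W
  eventually_bot : ∃ a : ℤ, ∀ i ≤ a, W i = ⊥
  eventually_top : ∃ b : ℤ, ∀ i : ℤ, b ≤ i → W i = ⊤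
  map_le : ∀ i : ℤ, W i ≤ Submodule.comap N (W (i - 2))
  gr_bijective : ∀ i : ℕ,
    ∀ (h1 : W (i : ℤ) ≤ Submodule.comap (N ^ i) (W (-(i : ℤ))))
      (h2 : W ((i : ℤ) - 1) ≤ Submodule.comap (N ^ i) (W (-(i : ℤ) - 1))),
      Function.Bijective
        (inducedQuot (N ^ i) (W (i : ℤ)) (W ((i : ℤ) - 1)) (W (-(i : ℤ))) (W (-(i : ℤ) - 1))
          h1 h2)

theorem IsWeightFiltration.pow_mem {N : Module.End ℂ H} {W : ℤ → Submodule ℂ H}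
    (hW : IsWeightFiltration N W) (k : ℕ) :
    ∀ (i j : ℤ), i - 2 * k ≤ j → ∀ x ∈ W i, (N ^ k) x ∈ W j := by
  induction k with
  | zero =>
    intro i j hij x hx
    exact hW.mono (by simpa using hij) (by simpa using hx)
  | succ k ih =>
    intro i j hij x hx
    rw [pow_succ, Module.End.mul_apply]
    exact ih (i - 2) j (by push_cast at hij; omega) _ (hW.map_le i hx)

theorem IsWeightFiltration.bij {N : Module.End ℂ H} {W : ℤ → Submodule ℂ H}
    (hW : IsWeightFiltration N W) (i : ℕ) :
    (∀ x ∈ W i, (N ^ i) x ∈ W (-(i : ℤ) - 1) → x ∈ W ((i : ℤ) - 1)) ∧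
    (∀ y ∈ W (-(i : ℤ)), ∃ x ∈ W i, y - (N ^ i) x ∈ W (-(i : ℤ) - 1)) := by
  have h := hW.gr_bijective i (fun x hx => hW.pow_mem i _ _ (by omega) x hx)
    (fun x hx => hW.pow_mem i _ _ (by omega) x hx)
  constructor
  · intro x hx hNx
    have h1 := (injective_iff_map_eq_zero _).1 h.1 (Submodule.Quotient.mk ⟨x, hx⟩) (by
      rw [inducedQuot, Submodule.mapQ_apply, Submodule.Quotient.mk_eq_zero]
      simpa using hNx)
    rw [Submodule.Quotient.mk_eq_zero] at h1
    simpa using h1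
  · intro y hy
    obtain ⟨q, hq⟩ := h.2 (Submodule.Quotient.mk ⟨y, hy⟩)
    obtain ⟨x, rfl⟩ := Submodule.Quotient.mk_surjective _ q
    refine ⟨x, x.2, ?_⟩
    have h2 := hq.symm
    rw [inducedQuot, Submodule.mapQ_apply, Submodule.Quotient.eq] at h2
    simpa using h2

theorem IsWeightFiltration.neg_surj {N : Module.End ℂ H} {W : ℤ → Submodule ℂ H}
    (hW : IsWeightFiltration N W) (l : ℕ) :
    ∀ y ∈ W (-(l : ℤ)), ∃ x ∈ W l, (N ^ l) x = y := by
  obtain ⟨a, ha⟩ := hW.eventually_bot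
  have key : ∀ n l : ℕ, -((l : ℤ) + n) ≤ a → ∀ y ∈ W (-(l : ℤ)), ∃ x ∈ W l, (N ^ l) x = y := by
    intro n
    induction n with
    | zero =>
      intro l hl y hy
      rw [ha _ (by simpa using hl), Submodule.mem_bot] at hy
      exact ⟨0, zero_mem _, by simp [hy]⟩
    | succ n ih =>
      intro l hl y hy
      obtain ⟨x, hx, hxy⟩ := (hW.bij l).2 y hy
      obtain ⟨z, hz, hzy⟩ := ih (l + 1) (by push_cast at hl ⊢; omega) (y - (N ^ l) x)
        (hW.mono (by push_cast; omega) hxy)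
      refine ⟨x + N z, add_mem hx (hW.mono (by push_cast; omega) (hW.map_le _ hz)), ?_⟩
      rw [pow_succ, Module.End.mul_apply] at hzy
      rw [map_add, hzy]
      abel
  exact key (l + a.natAbs) l (by omega)

theorem IsWeightFiltration.ker_le {N : Module.End ℂ H} {W : ℤ → Submodule ℂ H}
    (hW : IsWeightFiltration N W) (m : ℕ) (x : H) (hx : (N ^ m) x = 0) :
    x ∈ W ((m : ℤ) - 1) := by
  obtain ⟨b, hb⟩ := hW.eventually_top
  have key : ∀ n : ℕ, x ∈ W ((m : ℤ) + n - 1) → x ∈ W ((m : ℤ) - 1) := by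
    intro n
    induction n with
    | zero => intro h; simpa using h
    | succ n ih =>
      intro h
      apply ih
      have h1 := (hW.bij (m + n)).1 x (hW.mono (by push_cast; omega) h) (by
        rw [add_comm m n, pow_add, Module.End.mul_apply, hx, map_zero]
        exact zero_mem _)
      exact hW.mono (by push_cast; omega) h1
  apply key (b.natAbs + 1)
  rw [hb _ (by omega)]
  trivial

/-- `W^N_{-1} = Σ_{i ≥ 0} (Ker N^{i+1} ∩ Im N^{i+1})`. -/
theorem weight_neg_one_eq_iSup [FiniteDimensional ℂ H]
    {N : Module.End ℂ H} (hN : IsNilpotent N)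
    {W : ℤ → Submodule ℂ H} (hW : IsWeightFiltration N W) :
    W (-1) = ⨆ i : ℕ, LinearMap.ker (N ^ (i + 1)) ⊓ LinearMap.range (N ^ (i + 1)) := by
  apply le_antisymm
  · obtain ⟨K, hK⟩ := hN
    have key : ∀ n k : ℕ, K ≤ k + n → ∀ x ∈ W (2 * (k : ℤ) - 1), (N ^ k) x ∈
        ⨆ i : ℕ, LinearMap.ker (N ^ (i + 1)) ⊓ LinearMap.range (N ^ (i + 1)) := by
      intro n
      induction n with
      | zero =>
        intro k hk x _
        rw [pow_eq_zero_of_le (by simpa using hk) hK]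
        exact zero_mem _
      | succ n ih =>
        intro k hk x hx
        obtain ⟨z, hz, hzx⟩ := hW.neg_surj (2 * k + 1) ((N ^ (2 * k)) x)
          (hW.pow_mem _ _ _ (by push_cast; omega) x hx)
        have h1 := ih (k + 1) (by omega) z (hW.mono (by push_cast; omega) hz)
        have h2 : (N ^ (2 * k)) (x - N z) = 0 := by
          rw [pow_succ, Module.End.mul_apply] at hzx
          rw [map_sub, hzx, sub_self]
        have h3 : (N ^ k) x = (N ^ k) (x - N z) + (N ^ (k + 1)) z := by
          rw [pow_succ, Module.End.mul_apply, map_sub]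
          abel
        rw [h3]
        refine add_mem ?_ h1
        rcases k with _ | k
        · have h4 : x - N z = 0 := by simpa using h2
          rw [h4, map_zero]
          exact zero_mem _
        · refine Submodule.mem_iSup_of_mem k ⟨?_, ⟨_, rfl⟩⟩
          change (N ^ (k + 1)) ((N ^ (k + 1)) (x - N z)) = 0
          rw [← Module.End.mul_apply, ← pow_add, ← two_mul]
          exact h2
    intro x hx
    simpa using key K 0 (by omega) x (by simpa using hx)
  · refine iSup_le fun i => ?_
    rintro _ ⟨hx, ⟨y, rfl⟩⟩
    change (N ^ (i + 1)) ((N ^ (i + 1)) y) = 0 at hx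
    rw [← Module.End.mul_apply, ← pow_add] at hx
    exact hW.pow_mem _ _ _ (by push_cast; omega) y (hW.ker_le _ y hx)

end Paper
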